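/- Let m ≥ 2 and let 𝒜 : M_n(ℂ) → M_n(ℂ) be given by 𝒜(X) = Σ_{i=1}^m A_i X B_i with all A_i, B_i Hermitian. If ⟨𝒜(X), X⟩ > 0 for all nonzero X ∈ M_n(ℂ) (Frobenius inner product), then there exist positive matrices B_i' for i = 1, …, m, a positive matrix A_1', and Hermitian matrices A_i' for i = 2, …, m, such that 𝒜(X) = Σ_{i=1}^m A_i' X B_i' for all X ∈ M_n(ℂ). -/

import Mathlib

open Matrix ComplexOrder

lemma aux_perturb {S : Type*} [TopologicalSpace S] [CompactSpace S] [Nonempty S]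
    (P W : S → ℝ) (hP : Continuous P) (hW : Continuous W) (hpos : ∀ x, 0 < P x) :
    ∃ ε > 0, ∀ x, 0 < P x + ε * W x := by
  obtain ⟨x0, -, hx0⟩ := isCompact_univ.exists_isMinOn (s := (Set.univ : Set S))
    Set.univ_nonempty (f := fun x => W x / P x)
    (hW.div hP (fun x => (hpos x).ne')).continuousOn
  set l := W x0 / P x0 with hl
  have h1 : 0 < 1 + |l| := by positivity
  refine ⟨1 / (1 + |l|), by positivity, fun x => ?_⟩
  have h2 : l ≤ W x / P x := hx0 (Set.mem_univ x)
  have h3 : l * P x ≤ W x := (le_div_iff₀ (hpos x)).1 h2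
  have h4 : P x + 1 / (1 + |l|) * W x = (P x * (1 + |l|) + W x) / (1 + |l|) := by
    field_simp
  rw [h4]
  apply div_pos _ h1
  nlinarith [neg_abs_le l, hpos x, mul_nonneg (hpos x).le (by linarith [neg_abs_le l] : 0 ≤ |l| + l)]

lemma aux_cone {S : Type*} [TopologicalSpace S] [CompactSpace S] [Nonempty S]
    {m : ℕ} (hm : 2 ≤ m) (a b : S → (Fin m → ℝ)) (ha : Continuous a) (hb : Continuous b)
    (hab : ∀ x y, 0 < a x ⬝ᵥ b y) :
    ∃ c d : Fin m → ℝ, (∀ y, 0 < c ⬝ᵥ b y) ∧ (∀ x, 0 < d ⬝ᵥ a x) ∧ c ⬝ᵥ d = 0 := by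
  obtain ⟨x0⟩ := ‹Nonempty S›
  have : Nonempty S := ⟨x0⟩
  set c0 := a x0 with hc0
  have hc0pos : ∀ y, 0 < c0 ⬝ᵥ b y := hab x0
  have hcont : ∀ v : Fin m → ℝ, Continuous fun y => v ⬝ᵥ b y := fun v =>
    continuous_const.dotProduct hb
  have hcont' : ∀ v : Fin m → ℝ, Continuous fun y => v ⬝ᵥ a y := fun v =>
    continuous_const.dotProduct ha
  obtain ⟨v, hv⟩ : ∃ v : Fin m → ℝ, ∀ t : ℝ, v - t • c0 ≠ 0 := by
    by_contra! hcon
    have h1 : Module.finrank ℝ (Fin m → ℝ) ≤ 1 :=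
      finrank_le_one c0 (fun w => by
        obtain ⟨t, ht⟩ := hcon w
        exact ⟨t, (sub_eq_zero.1 ht).symm⟩)
    simp at h1
    omega
  obtain ⟨y0, -, hy0⟩ := isCompact_univ.exists_isMinOn (s := (Set.univ : Set S))
    Set.univ_nonempty (f := fun y => (v ⬝ᵥ b y) / (c0 ⬝ᵥ b y))
    ((hcont v).div (hcont c0) (fun x => (hc0pos x).ne')).continuousOn
  set l := (v ⬝ᵥ b y0) / (c0 ⬝ᵥ b y0) with hl
  set u := v - l • c0 with hu
  have hu0 : u ≠ 0 := hv l
  have huu : 0 < u ⬝ᵥ u := by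
    have := (dotProduct_self_star_pos_iff (v := u)).2 hu0
    simpa using this
  have hub : ∀ y, 0 ≤ u ⬝ᵥ b y := fun y => by
    have h2 : l ≤ (v ⬝ᵥ b y) / (c0 ⬝ᵥ b y) := hy0 (Set.mem_univ y)
    rw [le_div_iff₀ (hc0pos y)] at h2
    rw [hu, sub_dotProduct, smul_dotProduct, smul_eq_mul]
    linarith
  have huy0 : u ⬝ᵥ b y0 = 0 := by
    rw [hu, sub_dotProduct, smul_dotProduct, smul_eq_mul, hl,
      div_mul_cancel₀ _ (hc0pos y0).ne', sub_self]
  obtain ⟨ε, hε, hεp⟩ := aux_perturb (fun x => b y0 ⬝ᵥ a x) (fun x => (-u) ⬝ᵥ a x)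
    (hcont' _) (hcont' _) (fun x => by rw [dotProduct_comm]; exact hab x y0)
  set d := b y0 - ε • u with hd
  have hda : ∀ x, 0 < d ⬝ᵥ a x := fun x => by
    have := hεp x
    simp only [neg_dotProduct] at this
    rw [hd, sub_dotProduct, smul_dotProduct, smul_eq_mul]
    linarith
  have hud : u ⬝ᵥ d < 0 := by
    rw [hd, dotProduct_sub, dotProduct_smul, smul_eq_mul, huy0]
    nlinarith [mul_pos hε huu]
  have hcd : 0 < c0 ⬝ᵥ d := by rw [dotProduct_comm]; exact hda x0
  set t := -(u ⬝ᵥ d) / (c0 ⬝ᵥ d) with ht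
  have htpos : 0 < t := div_pos (by linarith) hcd
  refine ⟨u + t • c0, d, fun y => ?_, hda, ?_⟩
  · rw [add_dotProduct, smul_dotProduct, smul_eq_mul]
    have := hub y
    have := mul_pos htpos (hc0pos y)
    linarith
  · rw [add_dotProduct, smul_dotProduct, smul_eq_mul, ht, div_mul_cancel₀ _ hcd.ne']
    ring

lemma aux_basis {S : Type*} [TopologicalSpace S] [CompactSpace S] [Nonempty S]
    {m : ℕ} (hm : 2 ≤ m) (a b : S → (Fin m → ℝ)) (ha : Continuous a) (hb : Continuous b)
    (hab : ∀ x y, 0 < a x ⬝ᵥ b y) (k : Fin m) :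
    ∃ (s : Module.Basis (Fin m) ℝ (Fin m → ℝ)) (d : Fin m → ℝ),
      (∀ i y, 0 < s i ⬝ᵥ b y) ∧ (∀ x, 0 < d ⬝ᵥ a x) ∧ ∀ v, s.coord k v = d ⬝ᵥ v := by
  obtain ⟨c, d, hc, hd, hcd⟩ := aux_cone hm a b ha hb hab
  obtain ⟨x0⟩ := ‹Nonempty S›
  have : Nonempty S := ⟨x0⟩
  have hcont : ∀ v : Fin m → ℝ, Continuous fun y => v ⬝ᵥ b y := fun v =>
    continuous_const.dotProduct hb
  set s1 : Fin m → ℝ := (d ⬝ᵥ a x0)⁻¹ • a x0 with hs1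
  have hs1d : d ⬝ᵥ s1 = 1 := by
    rw [hs1, dotProduct_smul, smul_eq_mul, inv_mul_cancel₀ (hd x0).ne']
  have hs1b : ∀ y, 0 < s1 ⬝ᵥ b y := fun y => by
    rw [hs1, smul_dotProduct, smul_eq_mul]
    exact mul_pos (inv_pos.2 (hd x0)) (hab x0 y)
  have hs10 : s1 ≠ 0 := by
    intro h0
    rw [h0] at hs1d
    simp at hs1d
  set K : Set (Fin m → ℝ) := {v | (∀ y, 0 < v ⬝ᵥ b y) ∧ d ⬝ᵥ v = 0} with hK
  have hcK : c ∈ K := ⟨hc, by rw [dotProduct_comm]; exact hcd⟩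
  have hperp : ∀ w, d ⬝ᵥ w = 0 → w ∈ Submodule.span ℝ K := by
    intro w hw
    obtain ⟨ε, hε, hεp⟩ := aux_perturb (fun y => c ⬝ᵥ b y) (fun y => w ⬝ᵥ b y)
      (hcont _) (hcont _) hc
    have h1 : c + ε • w ∈ K := by
      refine ⟨fun y => ?_, ?_⟩
      · rw [add_dotProduct, smul_dotProduct, smul_eq_mul]; exact hεp y
      · rw [dotProduct_add, dotProduct_smul, hw, hcK.2]; simp
    have h2 : w = ε⁻¹ • ((c + ε • w) - c) := by
      rw [add_sub_cancel_left, smul_smul, inv_mul_cancel₀ hε.ne', one_smul]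
    rw [h2]
    exact Submodule.smul_mem _ _ (Submodule.sub_mem _ (Submodule.subset_span h1)
      (Submodule.subset_span hcK))
  have hspan : ⊤ ≤ Submodule.span ℝ (insert s1 K) := by
    intro v _
    have h1 : v = (d ⬝ᵥ v) • s1 + (v - (d ⬝ᵥ v) • s1) := by abel
    rw [h1]
    refine Submodule.add_mem _ (Submodule.smul_mem _ _
      (Submodule.subset_span (Set.mem_insert _ _))) ?_
    refine Submodule.span_mono (Set.subset_insert _ _) (hperp _ ?_)
    rw [dotProduct_sub, dotProduct_smul, hs1d]; simp
  have hli : LinearIndepOn ℝ id ({s1} : Set (Fin m → ℝ)) := by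
    simpa using hs10
  have hst : ({s1} : Set (Fin m → ℝ)) ⊆ insert s1 K := by simp
  let t := Module.Basis.extendLe hli hst hspan
  have htr := Module.Basis.extendLe_subset hli hst hspan
  obtain ⟨i0, hi0⟩ : ∃ i0, t i0 = s1 := Module.Basis.subset_extendLe hli hst hspan rfl
  let _ : Fintype (hli.extend hst) := FiniteDimensional.fintypeBasisIndex t
  have hcard : Fintype.card (hli.extend hst) = Fintype.card (Fin m) := by
    rw [← Module.finrank_eq_card_basis t]; simp
  let e0 := Fintype.equivOfCardEq hcard
  let e := e0.trans (Equiv.swap (e0 i0) k)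
  have hek : e.symm k = i0 := by
    rw [Equiv.symm_apply_eq]; simp [e]
  let s := t.reindex e
  have hsk : s k = s1 := by simp [s, hek, hi0]
  have hmem : ∀ i, s i ∈ insert s1 K := fun i => htr ⟨e.symm i, by simp [s, t]⟩
  have hother : ∀ i, i ≠ k → s i ∈ K := fun i hi => by
    rcases hmem i with h1 | h1
    · exact absurd (s.injective (h1.trans hsk.symm)) hi
    · exact h1
  refine ⟨s, d, fun i y => ?_, hd, fun v => ?_⟩
  · rcases hmem i with h1 | h1
    · rw [h1]; exact hs1b y
    · exact h1.1 y
  · let D : (Fin m → ℝ) →ₗ[ℝ] ℝ := dotProductBilin ℝ ℝ d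
    have : s.coord k = D := by
      apply s.ext
      intro i
      by_cases hi : i = k
      · subst hi
        simp only [Module.Basis.coord_apply, Module.Basis.repr_self, Finsupp.single_eq_same]
        rw [hsk]; exact hs1d.symm
      · simp only [Module.Basis.coord_apply, Module.Basis.repr_self]
        rw [Finsupp.single_eq_of_ne (Ne.symm hi)]
        exact (hother i hi).2.symm
    rw [this]; rfl

/-- real quadratic form -/
def qf {n : ℕ} (M : Matrix (Fin n) (Fin n) ℂ) (x : Fin n → ℂ) : ℝ := (star x ⬝ᵥ (M *ᵥ x)).re

lemma qf_coe {n : ℕ} {M : Matrix (Fin n) (Fin n) ℂ} (hM : M.IsHermitian) (x : Fin n → ℂ) :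
    star x ⬝ᵥ (M *ᵥ x) = (qf M x : ℂ) := by
  have h := hM.im_star_dotProduct_mulVec_self x
  apply Complex.ext
  · simp [qf]
  · simpa using h

lemma qf_sum {n m : ℕ} (c : Fin m → ℝ) (M : Fin m → Matrix (Fin n) (Fin n) ℂ) (x : Fin n → ℂ) :
    qf (∑ i, (c i : ℂ) • M i) x = c ⬝ᵥ fun i => qf (M i) x := by
  simp [qf, Matrix.sum_mulVec, dotProduct_sum, smul_mulVec, dotProduct_smul]
  simp [dotProduct]

lemma herm_sum {n m : ℕ} (c : Fin m → ℝ) (M : Fin m → Matrix (Fin n) (Fin n) ℂ)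
    (hM : ∀ i, (M i).IsHermitian) : (∑ i, (c i : ℂ) • M i).IsHermitian := by
  unfold Matrix.IsHermitian
  rw [conjTranspose_sum]
  refine Finset.sum_congr rfl fun i _ => ?_
  rw [conjTranspose_smul, (hM i).eq]; simp

lemma posDef_of_sphere {n m : ℕ} (c : Fin m → ℝ) (M : Fin m → Matrix (Fin n) (Fin n) ℂ)
    (hM : ∀ i, (M i).IsHermitian)
    (hc : ∀ x : Metric.sphere (0 : Fin n → ℂ) 1, 0 < c ⬝ᵥ fun i => qf (M i) x) :
    (∑ i, (c i : ℂ) • M i).PosDef := by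
  refine PosDef.of_dotProduct_mulVec_pos (herm_sum c M hM) fun x hx => ?_
  rw [qf_coe (herm_sum c M hM)]
  have hn : 0 < ‖x‖ := norm_pos_iff.2 hx
  let z : Fin n → ℂ := ((‖x‖⁻¹ : ℝ) : ℂ) • x
  have hz : z ∈ Metric.sphere (0 : Fin n → ℂ) 1 := by
    simp [z, norm_smul, hn.ne']
  have h1 := hc ⟨z, hz⟩
  rw [← qf_sum] at h1
  have h2 : x = ((‖x‖ : ℝ) : ℂ) • z := by
    simp only [z, smul_smul]
    rw [← Complex.ofReal_mul, mul_inv_cancel₀ hn.ne']; simp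
  have h3 : qf (∑ i, (c i : ℂ) • M i) x = ‖x‖ * ‖x‖ * qf (∑ i, (c i : ℂ) • M i) z := by
    conv_lhs => rw [h2]
    simp only [qf, star_smul, mulVec_smul, dotProduct_smul, smul_dotProduct, smul_eq_mul]
    simp [mul_assoc]
  rw [h3]
  have : 0 < ‖x‖ * ‖x‖ * qf (∑ i, (c i : ℂ) • M i) z := by positivity
  exact_mod_cast this

lemma trace_rank_one {n : ℕ} (A B : Matrix (Fin n) (Fin n) ℂ) (x y : Fin n → ℂ) :
    Matrix.trace ((vecMulVec x (star y))ᴴ * (A * vecMulVec x (star y) * B)) =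
      (star x ⬝ᵥ (A *ᵥ x)) * (star y ⬝ᵥ (B *ᵥ y)) := by
  rw [conjTranspose_vecMulVec, star_star, mul_vecMulVec, vecMulVec_mul _ _ B, vecMulVec_mul_vecMulVec,
    trace_vecMulVec]
  rw [dotProduct_smul, smul_eq_mul, dotProduct_comm y, ← dotProduct_mulVec]

/-- If `m ≥ 2`, `𝒜(X) = ∑ᵢ Aᵢ X Bᵢ` with all `Aᵢ, Bᵢ` Hermitian, and
`⟨𝒜(X), X⟩ > 0` for all nonzero `X` (Frobenius inner product), then there exist
positive matrices `Bᵢ'`, a positive matrix `A₁'`, and Hermitian matrices `Aᵢ'`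
(for `i ≥ 2`) with `𝒜(X) = ∑ᵢ Aᵢ' X Bᵢ'` for all `X`. -/
theorem positive_B_decomposition {n m : ℕ} (hm : 2 ≤ m)
    (A B : Fin m → Matrix (Fin n) (Fin n) ℂ)
    (hA : ∀ i, (A i).IsHermitian) (hB : ∀ i, (B i).IsHermitian)
    (h : ∀ X : Matrix (Fin n) (Fin n) ℂ, X ≠ 0 →
      (Matrix.trace (Xᴴ * ∑ i, A i * X * B i)).im = 0 ∧
      0 < (Matrix.trace (Xᴴ * ∑ i, A i * X * B i)).re) :
    ∃ A' B' : Fin m → Matrix (Fin n) (Fin n) ℂ,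
      (∀ i, (B' i).PosDef) ∧
      (A' ⟨0, by omega⟩).PosDef ∧
      (∀ i, (A' i).IsHermitian) ∧
      (∀ X : Matrix (Fin n) (Fin n) ℂ, ∑ i, A i * X * B i = ∑ i, A' i * X * B' i) := by
  by_cases hn : n = 0
  · subst hn
    refine ⟨fun _ => 1, fun _ => 1, fun _ => PosDef.one, PosDef.one, fun _ => isHermitian_one,
      fun X => Subsingleton.elim _ _⟩
  have : NeZero n := ⟨hn⟩
  have hne : Nonempty (Metric.sphere (0 : Fin n → ℂ) 1) :=
    ⟨⟨fun _ => 1, by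
      have : Nonempty (Fin n) := ⟨0⟩
      rw [mem_sphere_zero_iff_norm, pi_norm_const]; simp⟩⟩
  have hcomp : CompactSpace (Metric.sphere (0 : Fin n → ℂ) 1) :=
    isCompact_iff_compactSpace.1 (isCompact_sphere _ _)
  have hcont : ∀ M : Fin m → Matrix (Fin n) (Fin n) ℂ,
      Continuous fun (x : Metric.sphere (0 : Fin n → ℂ) 1) => (fun i => qf (M i) (x : Fin n → ℂ)) := by
    intro M
    refine continuous_pi fun i => ?_
    unfold qf
    refine Complex.continuous_re.comp ?_
    exact (continuous_subtype_val.star).dotProduct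
      (continuous_const.matrix_mulVec continuous_subtype_val)
  obtain ⟨s, d, hs, hd, hcoord⟩ := aux_basis hm
    (fun (x : Metric.sphere (0 : Fin n → ℂ) 1) => fun i => qf (A i) (x : Fin n → ℂ))
    (fun (x : Metric.sphere (0 : Fin n → ℂ) 1) => fun i => qf (B i) (x : Fin n → ℂ))
    (hcont A) (hcont B) (by
      intro x y
      have hx : (x : Fin n → ℂ) ≠ 0 := ne_zero_of_mem_unit_sphere x
      have hy : (y : Fin n → ℂ) ≠ 0 := ne_zero_of_mem_unit_sphere y
      have h1 := (h (vecMulVec (x : Fin n → ℂ) (star (y : Fin n → ℂ))) (by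
        simp [vecMulVec_eq_zero, hx, hy])).2
      rw [Finset.mul_sum, trace_sum] at h1
      simp only [trace_rank_one, qf_coe (hA _), qf_coe (hB _)] at h1
      rw [← Complex.ofReal_re (_ ⬝ᵥ _)]
      simpa [dotProduct] using h1) ⟨0, by omega⟩
  refine ⟨fun i => ∑ j, ((s.coord i (Pi.single j 1) : ℝ) : ℂ) • A j,
    fun i => ∑ j, ((s i j : ℝ) : ℂ) • B j, fun i => posDef_of_sphere _ _ hB (hs i), ?_,
    fun i => herm_sum _ _ hA, fun X => ?_⟩
  · refine posDef_of_sphere _ _ hA fun x => ?_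
    have : (fun j => s.coord (⟨0, by omega⟩ : Fin m) (Pi.single j 1)) = d := by
      funext j
      rw [hcoord]; simp
    rw [this]
    exact hd x
  · have key : ∀ j k : Fin m, ∑ i, ((s.coord i (Pi.single j 1) : ℝ) : ℂ) * ((s i k : ℝ) : ℂ)
        = if j = k then 1 else 0 := by
      intro j k
      have h1 := congrFun (s.sum_repr (Pi.single j 1)) k
      simp only [Finset.sum_apply, Pi.smul_apply, smul_eq_mul] at h1
      simp only [Module.Basis.coord_apply]
      rw [Pi.single_apply] at h1
      have h2 := congrArg (fun r : ℝ => (r : ℂ)) h1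
      push_cast at h2
      rw [h2]
      by_cases hjk : j = k
      · simp [hjk]
      · simp [hjk, Ne.symm hjk]
    symm
    calc ∑ i, (∑ j, ((s.coord i (Pi.single j 1) : ℝ) : ℂ) • A j) * X * (∑ k, ((s i k : ℝ) : ℂ) • B k)
        = ∑ i, ∑ j, ∑ k, (((s.coord i (Pi.single j 1) : ℝ) : ℂ) * ((s i k : ℝ) : ℂ)) •
            (A j * X * B k) := by
          refine Finset.sum_congr rfl fun i _ => ?_
          rw [Finset.sum_mul, Finset.sum_mul]
          refine Finset.sum_congr rfl fun j _ => ?_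
          rw [Finset.mul_sum]
          refine Finset.sum_congr rfl fun k _ => ?_
          rw [smul_mul_assoc, smul_mul_assoc, mul_smul_comm, smul_smul]
      _ = ∑ j, ∑ k, (∑ i, ((s.coord i (Pi.single j 1) : ℝ) : ℂ) * ((s i k : ℝ) : ℂ)) •
            (A j * X * B k) := by
          rw [Finset.sum_comm]
          refine Finset.sum_congr rfl fun j _ => ?_
          rw [Finset.sum_comm]
          refine Finset.sum_congr rfl fun k _ => ?_
          rw [Finset.sum_smul]
      _ = ∑ j, A j * X * B j := by
          simp only [key, ite_smul, one_smul, zero_smul]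
          simp
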